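/- arXiv:1609.09191 — 2 statements merged into one kernel-verified Lean document; each statement's English description precedes it below -/
import Mathlib

section
/- Let m, n be positive integers, Ω : Matrix (Fin n) (Fin n) ℂ Hermitian (Ωᴴ = Ω), C : Matrix (Fin m) (Fin n) ℂ, and S : Matrix (Fin m) (Fin m) ℂ unitary (Sᴴ * S = 1 = S * Sᴴ). Set A := -Complex.I • Ω - (1/2 : ℂ) • (Cᴴ * C). Then for every real ω such that (Complex.I * ω) • 1 - A is invertible, the transfer-function matrix G ω := S - C * ((Complex.I * ω) • 1 - A)⁻¹ * Cᴴ * S is unitary, i.e. (G ω) * (G ω)ᴴ = 1 and (G ω)ᴴ * (G ω) = 1. -/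
open scoped Matrix

/-- **Unitarity of the transfer function of a passive quantum linear system.**
For a passive quantum linear system with Hermitian Hamiltonian matrix `Ω`, coupling
matrix `C`, unitary scattering matrix `S` and `A = -iΩ - (1/2)CᴴC`, the transfer
function `G ω = S - C((iω)·1 - A)⁻¹CᴴS` is unitary at every real frequency `ω` at
which `(iω)·1 - A` is invertible. -/
theorem transfer_function_unitary
    (m n : ℕ) (hm : 0 < m) (hn : 0 < n)
    (Ω : Matrix (Fin n) (Fin n) ℂ) (hΩ : Ωᴴ = Ω)
    (C : Matrix (Fin m) (Fin n) ℂ)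
    (S : Matrix (Fin m) (Fin m) ℂ) (hS₁ : Sᴴ * S = 1) (hS₂ : S * Sᴴ = 1)
    (A : Matrix (Fin n) (Fin n) ℂ)
    (hA : A = -Complex.I • Ω - (1/2 : ℂ) • (Cᴴ * C))
    (G : ℝ → Matrix (Fin m) (Fin m) ℂ)
    (hG : ∀ ω : ℝ,
      G ω = S - C * ((Complex.I * (ω : ℂ)) • (1 : Matrix (Fin n) (Fin n) ℂ) - A)⁻¹ * Cᴴ * S) :
    ∀ ω : ℝ,
      IsUnit ((Complex.I * (ω : ℂ)) • (1 : Matrix (Fin n) (Fin n) ℂ) - A) →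
      (G ω) * (G ω)ᴴ = 1 ∧ (G ω)ᴴ * (G ω) = 1 := by
  intro ω hU
  suffices h : G ω * (G ω)ᴴ = 1 from ⟨h, mul_eq_one_comm.mp h⟩
  rw [hG ω]
  have hM : ((Complex.I * (ω : ℂ)) • (1 : Matrix (Fin n) (Fin n) ℂ) - A)
      + ((Complex.I * (ω : ℂ)) • (1 : Matrix (Fin n) (Fin n) ℂ) - A)ᴴ = Cᴴ * C := by
    rw [hA]
    simp only [Matrix.conjTranspose_sub, Matrix.conjTranspose_smul, Matrix.conjTranspose_mul,
      Matrix.conjTranspose_conjTranspose, Matrix.conjTranspose_one, hΩ, Matrix.conjTranspose_neg]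
    simp
    module
  generalize (Complex.I * (ω : ℂ)) • (1 : Matrix (Fin n) (Fin n) ℂ) - A = M at hU hM ⊢
  have hdet : IsUnit M.det := (Matrix.isUnit_iff_isUnit_det M).mp hU
  have h1 : M⁻¹ * M = 1 := Matrix.nonsing_inv_mul M hdet
  have h2 : Mᴴ * (M⁻¹)ᴴ = 1 := by
    rw [← Matrix.conjTranspose_mul, h1, Matrix.conjTranspose_one]
  generalize M⁻¹ = X at h1 h2 ⊢
  have key : X * (Cᴴ * C) * Xᴴ = Xᴴ + X := by
    rw [← hM, Matrix.mul_add, Matrix.add_mul, h1, Matrix.one_mul, Matrix.mul_assoc X, h2,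
      Matrix.mul_one]
  have e : S - C * X * Cᴴ * S = (1 - C * X * Cᴴ) * S := by
    rw [Matrix.sub_mul, Matrix.one_mul]
  have e2 : C * X * Cᴴ * (C * Xᴴ * Cᴴ) = C * Xᴴ * Cᴴ + C * X * Cᴴ := by
    calc C * X * Cᴴ * (C * Xᴴ * Cᴴ) = C * (X * (Cᴴ * C) * Xᴴ) * Cᴴ := by
          simp only [Matrix.mul_assoc]
      _ = _ := by rw [key, Matrix.mul_add, Matrix.add_mul]
  rw [e, Matrix.conjTranspose_mul, Matrix.mul_assoc, ← Matrix.mul_assoc S, hS₂, Matrix.one_mul]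
  have e3 : (1 - C * X * Cᴴ)ᴴ = 1 - C * Xᴴ * Cᴴ := by
    simp [Matrix.conjTranspose_mul, Matrix.mul_assoc]
  rw [e3, Matrix.sub_mul, Matrix.one_mul, Matrix.mul_sub, Matrix.mul_one, e2]
  abel
end

section
/- Let m be a positive integer, 𝒜 : ℝ → Matrix (Fin m) (Fin m) ℂ with every entry function t ↦ 𝒜 t i j integrable on ℝ, and φ : (Fin m → ℝ) → (Fin m → Fin m) → ℂ with every component t ↦ φ t j integrable with respect to Lebesgue product measure on Fin m → ℝ. Define the m-fold matrix convolution φ̃ (r : Fin m → ℝ) (i : Fin m → Fin m) := Σ over j : Fin m → Fin m of ∫ t : (Fin m → ℝ), (∏ k : Fin m, 𝒜 (r k - t k) (i k) (j k)) * φ t j. Define unnormalized Fourier transforms 𝒜̂ ω := ∫ t : ℝ, Complex.exp (-Complex.I * ω * t) • 𝒜 t, φ̂ ω j := ∫ t : (Fin m → ℝ), Complex.exp (-Complex.I * Σ k, (ω k) * (t k)) * φ t j, and analogously φ̃̂ for φ̃. Then for every ω : Fin m → ℝ and every i : Fin m → Fin m, φ̃̂ ω i = Σ over j : Fin m → Fin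 m of (∏ k : Fin m, 𝒜̂ (ω k) (i k) (j k)) * φ̂ ω j. -/
open MeasureTheory

theorem aux_fold {m : ℕ} (a : Fin m → ℝ → ℂ) (ha : ∀ k, Integrable (a k) volume)
    (f : (Fin m → ℝ) → ℂ) (hf : Integrable f volume) (ω : Fin m → ℝ) :
    Integrable (fun r : Fin m → ℝ =>
      Complex.exp (-Complex.I * ((∑ k : Fin m, ω k * r k : ℝ) : ℂ)) *
        ∫ t : Fin m → ℝ, (∏ k, a k (r k - t k)) * f t) volume ∧
    ∫ r : Fin m → ℝ, Complex.exp (-Complex.I * ((∑ k : Fin m, ω k * r k : ℝ) : ℂ)) *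
        (∫ t : Fin m → ℝ, (∏ k, a k (r k - t k)) * f t) =
      (∏ k, ∫ t : ℝ, Complex.exp (-Complex.I * (ω k : ℂ) * (t : ℂ)) * a k t) *
      ∫ t : Fin m → ℝ, Complex.exp (-Complex.I * ((∑ k : Fin m, ω k * t k : ℝ) : ℂ)) * f t := by
  let F : (Fin m → ℝ) → ℂ := fun t =>
    Complex.exp (-Complex.I * ((∑ k : Fin m, ω k * t k : ℝ) : ℂ)) * f t
  let G : (Fin m → ℝ) → ℂ := fun t =>
    ∏ k, (Complex.exp (-Complex.I * (ω k : ℂ) * (t k : ℂ)) * a k (t k))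
  have hF : Integrable F volume := by
    refine hf.bdd_mul (c := 1) (Continuous.aestronglyMeasurable (by fun_prop))
      (Filter.Eventually.of_forall fun t => ?_)
    rw [Complex.norm_exp]
    simp
  have hG : Integrable G volume := by
    refine Integrable.fintype_prod
      (f := fun k (t : ℝ) => Complex.exp (-Complex.I * (ω k : ℂ) * (t : ℂ)) * a k t) fun k => ?_
    refine (ha k).bdd_mul (c := 1) (Continuous.aestronglyMeasurable (by fun_prop))
      (Filter.Eventually.of_forall fun t => ?_)
    rw [Complex.norm_exp]
    simp
  have key : (fun r : Fin m → ℝ =>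
      Complex.exp (-Complex.I * ((∑ k : Fin m, ω k * r k : ℝ) : ℂ)) *
        ∫ t : Fin m → ℝ, (∏ k, a k (r k - t k)) * f t) =
      convolution F G (ContinuousLinearMap.mul ℝ ℂ) volume := by
    funext r
    rw [convolution_def, ← integral_const_mul]
    congr 1
    funext t
    simp only [F, G, ContinuousLinearMap.mul_apply', Finset.prod_mul_distrib, Pi.sub_apply,
      ← Complex.exp_sum]
    have : Complex.exp (-Complex.I * ((∑ k : Fin m, ω k * r k : ℝ) : ℂ)) =
        Complex.exp (-Complex.I * ((∑ k : Fin m, ω k * t k : ℝ) : ℂ)) *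
        Complex.exp (∑ k : Fin m, -Complex.I * (ω k : ℂ) * ((r k - t k : ℝ) : ℂ)) := by
      rw [← Complex.exp_add]
      congr 1
      push_cast
      rw [Finset.mul_sum, Finset.mul_sum, ← Finset.sum_add_distrib]
      exact Finset.sum_congr rfl fun k _ => by ring
    rw [this]
    ring
  constructor
  · rw [key]
    exact hF.integrable_convolution _ hG
  · rw [key, integral_convolution _ hF hG, ContinuousLinearMap.mul_apply', mul_comm]
    congr 1
    exact integral_fintype_prod_volume_eq_prod
      (fun k (t : ℝ) => Complex.exp (-Complex.I * (ω k : ℂ) * (t : ℂ)) * a k t)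

attribute [local instance] Matrix.normedAddCommGroup Matrix.normedSpace

/-- **Eq. (28): the m-fold time-domain convolution becomes a frequency-domain
multilinear product under the m-dimensional Fourier transform.**
For an integrable matrix function `𝒜` and an integrable `m`-way `m`-dimensional tensor
function `φ`, the Fourier transform of the convolution `φ̃ = φ ⊛_t 𝒜` is obtained by
acting with `𝒜̂ (ω k)` on the `k`-th index slot of `φ̂ ω`. -/
theorem fourier_of_m_fold_convolution
    (m : ℕ) (hm : 0 < m)
    (𝒜 : ℝ → Matrix (Fin m) (Fin m) ℂ)
    (h𝒜 : ∀ i j : Fin m, Integrable (fun t : ℝ => 𝒜 t i j) volume)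
    (φ : (Fin m → ℝ) → (Fin m → Fin m) → ℂ)
    (hφ : ∀ j : Fin m → Fin m, Integrable (fun t : Fin m → ℝ => φ t j) volume)
    (φt : (Fin m → ℝ) → (Fin m → Fin m) → ℂ)
    (hφt : ∀ (r : Fin m → ℝ) (i : Fin m → Fin m),
      φt r i = ∑ j : Fin m → Fin m,
        ∫ t : Fin m → ℝ, (∏ k : Fin m, 𝒜 (r k - t k) (i k) (j k)) * φ t j)
    (𝒜hat : ℝ → Matrix (Fin m) (Fin m) ℂ)
    (h𝒜hat : ∀ ω : ℝ,
      𝒜hat ω = ∫ t : ℝ, Complex.exp (-Complex.I * (ω : ℂ) * (t : ℂ)) • 𝒜 t)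
    (φhat : (Fin m → ℝ) → (Fin m → Fin m) → ℂ)
    (hφhat : ∀ (ω : Fin m → ℝ) (j : Fin m → Fin m),
      φhat ω j = ∫ t : Fin m → ℝ,
        Complex.exp (-Complex.I * ((∑ k : Fin m, ω k * t k : ℝ) : ℂ)) * φ t j)
    (φthat : (Fin m → ℝ) → (Fin m → Fin m) → ℂ)
    (hφthat : ∀ (ω : Fin m → ℝ) (i : Fin m → Fin m),
      φthat ω i = ∫ t : Fin m → ℝ,
        Complex.exp (-Complex.I * ((∑ k : Fin m, ω k * t k : ℝ) : ℂ)) * φt t i) :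
    ∀ (ω : Fin m → ℝ) (i : Fin m → Fin m),
      φthat ω i = ∑ j : Fin m → Fin m, (∏ k : Fin m, 𝒜hat (ω k) (i k) (j k)) * φhat ω j := by
  intro ω i
  have hent : ∀ (w : ℝ) (p q : Fin m), 𝒜hat w p q =
      ∫ t : ℝ, Complex.exp (-Complex.I * (w : ℂ) * (t : ℂ)) * 𝒜 t p q := by
    intro w p q
    have hI : ∀ p q, Integrable
        (fun t : ℝ => Complex.exp (-Complex.I * (w : ℂ) * (t : ℂ)) * 𝒜 t p q) volume := by
      intro p q
      refine (h𝒜 p q).bdd_mul (c := 1) (Continuous.aestronglyMeasurable (by fun_prop))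
        (Filter.Eventually.of_forall fun t => ?_)
      rw [Complex.norm_exp]
      simp
    rw [h𝒜hat]
    let B : ℝ → Fin m → Fin m → ℂ :=
      fun t p q => Complex.exp (-Complex.I * (w : ℂ) * (t : ℂ)) * 𝒜 t p q
    change (∫ t, B t) p q = ∫ t, B t p q
    rw [eval_integral (fun p => Integrable.of_eval (hI p)), eval_integral (hI p)]
  rw [hφthat]
  simp only [hφt, Finset.mul_sum, hent, hφhat]
  have H := fun j : Fin m → Fin m =>
    aux_fold (fun k t => 𝒜 t (i k) (j k)) (fun k => h𝒜 _ _) (fun t => φ t j) (hφ j) ω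
  rw [integral_finset_sum _ fun j _ => (H j).1]
  exact Finset.sum_congr rfl fun j _ => (H j).2
end
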